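/- Elliptic differential inequality and L²-bound for the maximum principle (Proposition 7.2): Let H:ℝ^{2n}→ℝ be smooth and let u(s)=(v(s,·),η(s)) be a smooth solution of the Floer equations for (H,J₀): ∂_sv=−J₀(∂_tv−ηX^H(v)), ∂_sη=−∫₀¹H(v(s,t))dt, with v 1-periodic in t. Define f(s,t):=η(s)²·f₁(v(s,t))+η′(s)·f₂(v(s,t)). Then: (a) Δ(F∘v)=(∂_{ss}+∂_{tt})(F∘v) ≥ f everywhere on ℝ×S¹, where F(x)=¼‖x‖². (b) Assume in addition: ‖Hess_xH‖≤M, ‖∇H(x)‖≤h₁+M‖x‖ and ‖D³H_x‖·‖x‖≤L for all x; ∫_ℝ(‖∂_sv(s)‖²_{L²(S¹)}+|η′(s)|²)ds ≤ 𝔢; ‖v(s)‖_{L²}≤𝐯 and |η(s)|≤𝔶 for all s∈ℝ; and Ω⊆ℝ×S¹ is a connected open set such that, with s₀:=inf{s : (s,t)∈Ω} and s₁:=sup{s : (s,t)∈Ω}, one has ‖∇𝒜^H(u(s))‖>ε for all s∈(s₀,s₁), where ε>0. Then ‖f‖_{L²(Ω)} ≤ C(𝔢,𝔶,𝐯,ε)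 < ∞, where C depends only on M,h₁,L and continuously on 𝔢,𝔶,𝐯,ε. -/

import Mathlib

open MeasureTheory intervalIntegral Set
open scoped RealInnerProductSpace Topology

noncomputable section

/-- Phase space `ℝ^{2n}`, realized as `ℂ^n` with its real inner product. -/
abbrev E (n : ℕ) := EuclideanSpace ℂ (Fin n)

/-- The standard linear complex structure `J₀` (multiplication by `i`). -/
def J0 {n : ℕ} (x : E n) : E n := Complex.I • x

/-- The standard symplectic form `ω₀(u,w) = ⟨J₀u, w⟩`. -/
def om {n : ℕ} (u w : E n) : ℝ := @inner ℝ _ _ (J0 u) w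

/-- The Hamiltonian vector field `X^H = J₀ ∇H`. -/
def XH {n : ℕ} (H : E n → ℝ) (x : E n) : E n := J0 (gradient H x)

/-- A loop: a smooth 1-periodic map `ℝ → ℝ^{2n}`. -/
def IsLoop {n : ℕ} (v : ℝ → E n) : Prop := ContDiff ℝ (⊤ : ℕ∞) v ∧ ∀ t, v (t + 1) = v t

/-- The `L²` norm on loops. -/
def L2 {n : ℕ} (v : ℝ → E n) : ℝ := Real.sqrt (∫ t in (0:ℝ)..1, ‖v t‖ ^ 2)

/-- The Rabinowitz action functional. -/
def RabAction {n : ℕ} (H : E n → ℝ) (v : ℝ → E n) (η : ℝ) : ℝ :=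
  (∫ t in (0:ℝ)..1, (1 / 2) * om (v t) (deriv v t)) - η * ∫ t in (0:ℝ)..1, H (v t)

/-- The norm `‖∇𝒜^H(v,η)‖ = ‖∂_t v − η X^H(v)‖_{L²} + |∫₀¹ H(v)|` of the `L²` gradient. -/
def gradNorm {n : ℕ} (H : E n → ℝ) (v : ℝ → E n) (η : ℝ) : ℝ :=
  L2 (fun t => deriv v t - η • XH H (v t)) + |∫ t in (0:ℝ)..1, H (v t)|

/-- A Liouville vector field on a set `U`. -/
def IsLiouvilleOn {n : ℕ} (X : E n → E n) (U : Set (E n)) : Prop :=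
  ∀ x ∈ U, ∀ u w : E n, om (fderiv ℝ X x u) w + om u (fderiv ℝ X x w) = om u w

/-- Condition (H1). -/
def SatH1 {n : ℕ} (H : E n → ℝ) (c₁ c₂ c₃ : ℝ) : Prop :=
  ∃ X : E n → E n, ContDiff ℝ (⊤ : ℕ∞) X ∧ IsLiouvilleOn X Set.univ ∧
    (∀ x, ‖X x‖ ≤ c₁ * (‖x‖ + 1)) ∧ ∀ x, fderiv ℝ H x (X x) ≥ c₂ * ‖x‖ ^ 2 - c₃

/-- Condition (H2). -/
def SatH2 {n : ℕ} (H : E n → ℝ) (L : ℝ) : Prop :=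
  ∀ x, ‖iteratedFDeriv ℝ 3 H x‖ * ‖x‖ ≤ L

/-- Condition (H3). -/
def SatH3 {n : ℕ} (H : E n → ℝ) (c₄ c₅ ν : ℝ) : Prop :=
  ∃ X : E n → E n, IsLiouvilleOn X (H ⁻¹' Ioo (-ν) ν) ∧
    (∀ x ∈ H ⁻¹' Ioo (-ν) ν, ‖X x‖ ≤ c₄ * (‖x‖ ^ 2 + 1)) ∧
    ∀ x ∈ H ⁻¹' Ioo (-ν) ν, fderiv ℝ H x (X x) ≥ c₅

/-- Admissible Hamiltonians. -/
def Admissible {n : ℕ} (H : E n → ℝ) : Prop :=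
  ContDiff ℝ (⊤ : ℕ∞) H ∧ ∃ c₁ c₂ c₃ L c₄ c₅ ν : ℝ,
    0 < c₁ ∧ 0 < c₂ ∧ 0 ≤ c₃ ∧ 0 ≤ L ∧ 0 < c₄ ∧ 0 < c₅ ∧ 0 < ν ∧
    SatH1 H c₁ c₂ c₃ ∧ SatH2 H L ∧ SatH3 H c₄ c₅ ν

/-- Uniform bound on the Hessian. -/
def HessBound {n : ℕ} (H : E n → ℝ) (M : ℝ) : Prop :=
  ∀ x, ‖iteratedFDeriv ℝ 2 H x‖ ≤ M

/-- Linear growth of the gradient. -/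
def GradBound {n : ℕ} (H : E n → ℝ) (M h₁ : ℝ) : Prop :=
  ∀ x, ‖gradient H x‖ ≤ h₁ + M * ‖x‖


/-- A Floer trajectory for a fixed Hamiltonian `H` and the standard complex structure `J₀`. -/
def FloerAut {n : ℕ} (H : E n → ℝ) (v : ℝ → ℝ → E n) (η : ℝ → ℝ) : Prop :=
  ContDiff ℝ (⊤ : ℕ∞) (fun p : ℝ × ℝ => v p.1 p.2) ∧ ContDiff ℝ (⊤ : ℕ∞) η ∧ (∀ s, IsLoop (v s)) ∧
  (∀ s t, deriv (fun σ => v σ t) s = -(J0 (deriv (v s) t - η s • XH H (v s t)))) ∧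
  ∀ s, deriv η s = -∫ t in (0:ℝ)..1, H (v s t)

/-- `dF(X^H)` for the radial function `F(x) = ¼‖x‖²` (so `∇F(x) = x/2`). -/
def afun {n : ℕ} (H : E n → ℝ) (x : E n) : ℝ :=
  @inner ℝ _ _ ((1 / 2 : ℝ) • x) (J0 (gradient H x))

/-- `f₂ = d^ℂF(X^H) = −⟨∇F, ∇H⟩` for the radial function `F(x) = ¼‖x‖²`. -/
def f2fun {n : ℕ} (H : E n → ℝ) (x : E n) : ℝ :=
  -(@inner ℝ _ _ ((1 / 2 : ℝ) • x) (gradient H x))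

/-- `f₁ = ⟨∇a, J₀∇H⟩ − ‖∇H‖² − ‖∇f₂‖² − ‖∇a‖²` where `a = dF(X^H)`. -/
def f1fun {n : ℕ} (H : E n → ℝ) (x : E n) : ℝ :=
  @inner ℝ _ _ (gradient (afun H) x) (J0 (gradient H x))
    - ‖gradient H x‖ ^ 2 - ‖gradient (f2fun H) x‖ ^ 2 - ‖gradient (afun H) x‖ ^ 2

/-- The Laplacian `Δ(F∘v)(s,t) = (∂_{ss} + ∂_{tt})(F∘v)(s,t)` of the radial function
`F(x) = ¼‖x‖²` composed with `v`. -/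
def lapF {n : ℕ} (v : ℝ → ℝ → E n) (s t : ℝ) : ℝ :=
  deriv (fun σ => deriv (fun σ' => (1 / 4) * ‖v σ' t‖ ^ 2) σ) s +
  deriv (fun τ => deriv (fun τ' => (1 / 4) * ‖v s τ'‖ ^ 2) τ) t

/-! ### Basic facts on `J0` and gradients -/

/-- `J0` as a real continuous linear map. -/
def JL (n : ℕ) : E n →L[ℝ] E n := Complex.I • ContinuousLinearMap.id ℝ (E n)

lemma JL_apply {n : ℕ} (x : E n) : JL n x = J0 x := rfl

lemma J0_J0 {n : ℕ} (x : E n) : J0 (J0 x) = -x := by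
  unfold J0
  rw [smul_smul, Complex.I_mul_I]
  simp

lemma inner_J0_left {n : ℕ} (x y : E n) : (inner ℝ (J0 x) y : ℝ) = -inner ℝ x (J0 y) := by
  unfold J0
  simp only [PiLp.inner_apply, ← Finset.sum_neg_distrib]
  refine Finset.sum_congr rfl fun i _ => ?_
  simp
  ring

lemma inner_J0_J0 {n : ℕ} (x y : E n) : (inner ℝ (J0 x) (J0 y) : ℝ) = inner ℝ x y := by
  rw [inner_J0_left, J0_J0, inner_neg_right, neg_neg]

lemma norm_J0 {n : ℕ} (x : E n) : ‖J0 x‖ = ‖x‖ := by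
  unfold J0
  rw [norm_smul]
  simp

lemma J0_add {n : ℕ} (x y : E n) : J0 (x + y) = J0 x + J0 y := smul_add _ _ _
lemma J0_neg {n : ℕ} (x : E n) : J0 (-x) = -J0 x := smul_neg _ _
lemma J0_sub {n : ℕ} (x y : E n) : J0 (x - y) = J0 x - J0 y := smul_sub _ _ _
lemma J0_smul {n : ℕ} (c : ℝ) (x : E n) : J0 (c • x) = c • J0 x := (JL n).map_smul c x

lemma inner_grad {n : ℕ} (f : E n → ℝ) (x w : E n) :
    (inner ℝ (gradient f x) w : ℝ) = fderiv ℝ f x w := by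
  simp [gradient]

lemma contDiff_grad {n : ℕ} {H : E n → ℝ} (hH : ContDiff ℝ (⊤ : ℕ∞) H) :
    ContDiff ℝ (⊤ : ℕ∞) (gradient H) := by
  have h1 : ContDiff ℝ (⊤ : ℕ∞) (fderiv ℝ H) := hH.fderiv_right (by simp)
  exact (InnerProductSpace.toDual ℝ (E n)).symm.contDiff.comp h1

lemma norm_fderiv_grad {n : ℕ} {H : E n → ℝ} (x : E n) :
    ‖fderiv ℝ (gradient H) x‖ = ‖iteratedFDeriv ℝ 2 H x‖ := by
  have e : gradient H = (InnerProductSpace.toDual ℝ (E n)).symm ∘ fderiv ℝ H := rfl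
  have h2 : ‖fderiv ℝ (gradient H) x‖ = ‖fderiv ℝ (fderiv ℝ H) x‖ := by
    rw [← norm_iteratedFDeriv_one, ← norm_iteratedFDeriv_one, e]
    exact (InnerProductSpace.toDual ℝ (E n)).symm.norm_iteratedFDeriv_comp_left _ _ _
  rw [h2, ← norm_iteratedFDeriv_one, norm_iteratedFDeriv_fderiv]

lemma fderiv_f2 {n : ℕ} {H : E n → ℝ} (hH : ContDiff ℝ (⊤ : ℕ∞) H) (x w : E n) :
    fderiv ℝ (f2fun H) x w = -(1/2) * inner ℝ w (gradient H x)
      - (1/2) * inner ℝ x (fderiv ℝ (gradient H) x w) := by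
  have hG : HasFDerivAt (gradient H) (fderiv ℝ (gradient H) x) x :=
    ((contDiff_grad hH).differentiable (by simp) x).hasFDerivAt
  have h1 := (((hasFDerivAt_id (𝕜 := ℝ) x).const_smul (1/2 : ℝ)).inner ℝ hG).neg
  have h2 : HasFDerivAt (f2fun H) _ x := h1
  rw [h2.fderiv]
  simp [real_inner_smul_left]
  ring

lemma fderiv_a {n : ℕ} {H : E n → ℝ} (hH : ContDiff ℝ (⊤ : ℕ∞) H) (x w : E n) :
    fderiv ℝ (afun H) x w = (1/2) * inner ℝ w (J0 (gradient H x))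
      + (1/2) * inner ℝ x (J0 (fderiv ℝ (gradient H) x w)) := by
  have hG : HasFDerivAt (gradient H) (fderiv ℝ (gradient H) x) x :=
    ((contDiff_grad hH).differentiable (by simp) x).hasFDerivAt
  have h1 := (((hasFDerivAt_id (𝕜 := ℝ) x).const_smul (1/2 : ℝ)).inner ℝ
    ((JL n).hasFDerivAt.comp x hG))
  have h2 : HasFDerivAt (afun H) _ x := h1
  rw [h2.fderiv]
  simp [real_inner_smul_left, JL_apply]
  ring

lemma contDiff_f2 {n : ℕ} {H : E n → ℝ} (hH : ContDiff ℝ (⊤ : ℕ∞) H) :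
    ContDiff ℝ (⊤ : ℕ∞) (f2fun H) :=
  ((contDiff_id.const_smul (1/2 : ℝ)).inner ℝ (contDiff_grad hH)).neg

lemma contDiff_a {n : ℕ} {H : E n → ℝ} (hH : ContDiff ℝ (⊤ : ℕ∞) H) :
    ContDiff ℝ (⊤ : ℕ∞) (afun H) :=
  ((contDiff_id.const_smul (1/2 : ℝ)).inner ℝ ((JL n).contDiff.comp (contDiff_grad hH)))

lemma continuous_f1 {n : ℕ} {H : E n → ℝ} (hH : ContDiff ℝ (⊤ : ℕ∞) H) :
    Continuous (f1fun H) := by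
  have hG := (contDiff_grad hH).continuous
  have ha := (contDiff_grad (contDiff_a hH)).continuous
  have h2 := (contDiff_grad (contDiff_f2 hH)).continuous
  have hJ : Continuous fun x => J0 (gradient H x) := (JL n).continuous.comp hG
  unfold f1fun
  fun_prop

/-! ### Pointwise bounds -/

lemma norm_grad_le {n : ℕ} {f : E n → ℝ} {x : E n} {c : ℝ} (hc : 0 ≤ c)
    (h : ∀ w, |fderiv ℝ f x w| ≤ c * ‖w‖) : ‖gradient f x‖ ≤ c := by
  have : ‖gradient f x‖ = ‖fderiv ℝ f x‖ := by simp [gradient]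
  rw [this]
  exact ContinuousLinearMap.opNorm_le_bound _ hc h

lemma norm_grad_f2_le {n : ℕ} {H : E n → ℝ} (hH : ContDiff ℝ (⊤ : ℕ∞) H) {M h₁ : ℝ}
    (hM : 0 < M) (hh₁ : 0 ≤ h₁) (h2 : HessBound H M) (h1 : GradBound H M h₁) (x : E n) :
    ‖gradient (f2fun H) x‖ ≤ h₁ + M * ‖x‖ := by
  have hx := norm_nonneg x
  refine norm_grad_le (by positivity) fun w => ?_
  rw [fderiv_f2 hH]
  have e1 := (abs_real_inner_le_norm w (gradient H x)).trans
    (mul_le_mul_of_nonneg_left (h1 x) (norm_nonneg w))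
  have e3 : ‖fderiv ℝ (gradient H) x w‖ ≤ M * ‖w‖ :=
    (ContinuousLinearMap.le_opNorm _ _).trans
      (mul_le_mul_of_nonneg_right ((norm_fderiv_grad x).le.trans (h2 x)) (norm_nonneg w))
  have e2 := (abs_real_inner_le_norm x (fderiv ℝ (gradient H) x w)).trans
    (mul_le_mul_of_nonneg_left e3 hx)
  have := mul_nonneg hh₁ (norm_nonneg w)
  rw [abs_le] at e1 e2 ⊢
  constructor <;> nlinarith

lemma norm_grad_a_le {n : ℕ} {H : E n → ℝ} (hH : ContDiff ℝ (⊤ : ℕ∞) H) {M h₁ : ℝ}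
    (hM : 0 < M) (hh₁ : 0 ≤ h₁) (h2 : HessBound H M) (h1 : GradBound H M h₁) (x : E n) :
    ‖gradient (afun H) x‖ ≤ h₁ + M * ‖x‖ := by
  have hx := norm_nonneg x
  refine norm_grad_le (by positivity) fun w => ?_
  rw [fderiv_a hH]
  have e1 := (abs_real_inner_le_norm w (J0 (gradient H x))).trans
    (mul_le_mul_of_nonneg_left ((norm_J0 _).le.trans (h1 x)) (norm_nonneg w))
  have e3 : ‖J0 (fderiv ℝ (gradient H) x w)‖ ≤ M * ‖w‖ :=
    (norm_J0 _).le.trans <| (ContinuousLinearMap.le_opNorm _ _).trans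
      (mul_le_mul_of_nonneg_right ((norm_fderiv_grad x).le.trans (h2 x)) (norm_nonneg w))
  have e2 := (abs_real_inner_le_norm x (J0 (fderiv ℝ (gradient H) x w))).trans
    (mul_le_mul_of_nonneg_left e3 hx)
  have := mul_nonneg hh₁ (norm_nonneg w)
  rw [abs_le] at e1 e2 ⊢
  constructor <;> nlinarith

lemma abs_f1_le {n : ℕ} {H : E n → ℝ} (hH : ContDiff ℝ (⊤ : ℕ∞) H) {M h₁ : ℝ}
    (hM : 0 < M) (hh₁ : 0 ≤ h₁) (h2 : HessBound H M) (h1 : GradBound H M h₁) (x : E n) :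
    |f1fun H x| ≤ 4 * (h₁ + M * ‖x‖) ^ 2 := by
  have hx := norm_nonneg x
  have hK : 0 ≤ h₁ + M * ‖x‖ := by positivity
  have a1 := h1 x
  have a2 := norm_grad_f2_le hH hM hh₁ h2 h1 x
  have a3 := norm_grad_a_le hH hM hh₁ h2 h1 x
  have e1 := abs_real_inner_le_norm (gradient (afun H) x) (J0 (gradient H x))
  rw [norm_J0] at e1
  have b0 := mul_le_mul a3 a1 (norm_nonneg _) hK
  have b1 := pow_le_pow_left₀ (norm_nonneg _) a1 2
  have b2 := pow_le_pow_left₀ (norm_nonneg _) a2 2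
  have b3 := pow_le_pow_left₀ (norm_nonneg _) a3 2
  unfold f1fun
  rw [abs_le] at e1 ⊢
  constructor <;> nlinarith [sq_nonneg ‖gradient H x‖, sq_nonneg ‖gradient (f2fun H) x‖,
    sq_nonneg ‖gradient (afun H) x‖]

lemma abs_f2_le {n : ℕ} {H : E n → ℝ} {M h₁ : ℝ}
    (hM : 0 < M) (hh₁ : 0 ≤ h₁) (h1 : GradBound H M h₁) (x : E n) :
    |f2fun H x| ≤ (1 / M) * (h₁ + M * ‖x‖) ^ 2 := by
  have hx := norm_nonneg x
  unfold f2fun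
  rw [abs_neg, real_inner_smul_left, abs_mul]
  have e1 := (abs_real_inner_le_norm x (gradient H x)).trans
    (mul_le_mul_of_nonneg_left (h1 x) hx)
  have e2 : ‖x‖ ≤ (1 / M) * (h₁ + M * ‖x‖) := by
    rw [mul_add, ← mul_assoc, one_div_mul_cancel hM.ne', one_mul]
    have : 0 ≤ 1 / M * h₁ := by positivity
    linarith
  have e3 : ‖x‖ * (h₁ + M * ‖x‖) ≤ (1 / M) * (h₁ + M * ‖x‖) * (h₁ + M * ‖x‖) :=
    mul_le_mul_of_nonneg_right e2 (by positivity)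
  have e4 : |(1/2 : ℝ)| = 1/2 := abs_of_pos (by norm_num)
  rw [e4]
  have := abs_nonneg (inner ℝ x (gradient H x) : ℝ)
  nlinarith

/-! ### Part (a) -/

lemma deriv2_quarter {n : ℕ} {c c' : ℝ → E n} {c'' : E n} {s : ℝ}
    (h1 : ∀ σ, HasDerivAt c (c' σ) σ) (h2 : HasDerivAt c' c'' s) :
    deriv (fun σ => deriv (fun σ' => (1 / 4) * ‖c σ'‖ ^ 2) σ) s
      = (1/2) * (‖c' s‖ ^ 2 + inner ℝ (c s) c'') := by
  have e : (fun σ => deriv (fun σ' => (1 / 4) * ‖c σ'‖ ^ 2) σ)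
      = fun σ => (1/2) * (inner ℝ (c σ) (c' σ) : ℝ) := by
    funext σ
    rw [((h1 σ).norm_sq.const_mul (1/4 : ℝ)).deriv]
    ring
  rw [e, (((h1 s).inner ℝ h2).const_mul (1/2 : ℝ)).deriv, real_inner_self_eq_norm_sq]
  ring

lemma hasDerivAt_slice1 {F : Type*} [NormedAddCommGroup F] [NormedSpace ℝ F]
    {V : ℝ × ℝ → F} (hV : Differentiable ℝ V) (s t : ℝ) :
    HasDerivAt (fun σ => V (σ, t)) (fderiv ℝ V (s, t) (1, 0)) s := by
  have h : HasDerivAt (fun σ : ℝ => (σ, t)) ((1 : ℝ), (0 : ℝ)) s :=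
    (hasDerivAt_id s).prodMk (hasDerivAt_const s t)
  exact (hV (s, t)).hasFDerivAt.comp_hasDerivAt s h

lemma hasDerivAt_slice2 {F : Type*} [NormedAddCommGroup F] [NormedSpace ℝ F]
    {V : ℝ × ℝ → F} (hV : Differentiable ℝ V) (s t : ℝ) :
    HasDerivAt (fun τ => V (s, τ)) (fderiv ℝ V (s, t) (0, 1)) t := by
  have h : HasDerivAt (fun τ : ℝ => (s, τ)) ((0 : ℝ), (1 : ℝ)) t :=
    (hasDerivAt_const t s).prodMk (hasDerivAt_id t)
  exact (hV (s, t)).hasFDerivAt.comp_hasDerivAt t h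

/-- The partial derivative `∂_s v`. -/
def pS {n : ℕ} (v : ℝ → ℝ → E n) (p : ℝ × ℝ) : E n :=
  fderiv ℝ (fun p : ℝ × ℝ => v p.1 p.2) p (1, 0)

/-- The partial derivative `∂_t v`. -/
def pT {n : ℕ} (v : ℝ → ℝ → E n) (p : ℝ × ℝ) : E n :=
  fderiv ℝ (fun p : ℝ × ℝ => v p.1 p.2) p (0, 1)

section
variable {n : ℕ} {v : ℝ → ℝ → E n}

lemma contDiff_pS (hv : ContDiff ℝ (⊤ : ℕ∞) (fun p : ℝ × ℝ => v p.1 p.2)) :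
    ContDiff ℝ (⊤ : ℕ∞) (pS v) :=
  (hv.fderiv_right (m := (⊤ : ℕ∞)) (by simp)).clm_apply contDiff_const

lemma contDiff_pT (hv : ContDiff ℝ (⊤ : ℕ∞) (fun p : ℝ × ℝ => v p.1 p.2)) :
    ContDiff ℝ (⊤ : ℕ∞) (pT v) :=
  (hv.fderiv_right (m := (⊤ : ℕ∞)) (by simp)).clm_apply contDiff_const

lemma hasDerivAt_v1 (hv : ContDiff ℝ (⊤ : ℕ∞) (fun p : ℝ × ℝ => v p.1 p.2)) (s t : ℝ) :
    HasDerivAt (fun σ => v σ t) (pS v (s, t)) s :=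
  hasDerivAt_slice1 (hv.differentiable (by simp)) s t

lemma hasDerivAt_v2 (hv : ContDiff ℝ (⊤ : ℕ∞) (fun p : ℝ × ℝ => v p.1 p.2)) (s t : ℝ) :
    HasDerivAt (v s) (pT v (s, t)) t :=
  hasDerivAt_slice2 (hv.differentiable (by simp)) s t

lemma mixed (hv : ContDiff ℝ (⊤ : ℕ∞) (fun p : ℝ × ℝ => v p.1 p.2)) (p : ℝ × ℝ) :
    fderiv ℝ (pS v) p (0, 1) = fderiv ℝ (pT v) p (1, 0) := by
  have hd : DifferentiableAt ℝ (fderiv ℝ (fun p : ℝ × ℝ => v p.1 p.2)) p :=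
    (hv.fderiv_right (m := (⊤ : ℕ∞)) (by simp)).differentiable (by simp) p
  have hs : IsSymmSndFDerivAt ℝ (fun p : ℝ × ℝ => v p.1 p.2) p :=
    hv.contDiffAt.isSymmSndFDerivAt (by
      simp only [minSmoothness_of_isRCLikeNormedField]
      show ((2 : ℕ∞) : WithTop ℕ∞) ≤ ((⊤ : ℕ∞) : WithTop ℕ∞)
      exact WithTop.coe_le_coe.2 le_top)
  have e1 : fderiv ℝ (pS v) p (0, 1)
      = fderiv ℝ (fderiv ℝ (fun p : ℝ × ℝ => v p.1 p.2)) p (0, 1) (1, 0) := by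
    have := (hd.hasFDerivAt.clm_apply (hasFDerivAt_const ((1 : ℝ), (0 : ℝ)) p))
    have h2 : HasFDerivAt (pS v) _ p := this
    rw [h2.fderiv]
    simp
  have e2 : fderiv ℝ (pT v) p (1, 0)
      = fderiv ℝ (fderiv ℝ (fun p : ℝ × ℝ => v p.1 p.2)) p (1, 0) (0, 1) := by
    have := (hd.hasFDerivAt.clm_apply (hasFDerivAt_const ((0 : ℝ), (1 : ℝ)) p))
    have h2 : HasFDerivAt (pT v) _ p := this
    rw [h2.fderiv]
    simp
  rw [e1, e2]
  exact hs _ _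

variable {H : E n → ℝ} {η : ℝ → ℝ}

lemma floer_S (h : FloerAut H v η) (s t : ℝ) :
    pS v (s, t) = -J0 (pT v (s, t)) - η s • gradient H (v s t) := by
  have := h.2.2.2.1 s t
  rw [(hasDerivAt_v1 h.1 s t).deriv, (hasDerivAt_v2 h.1 s t).deriv] at this
  rw [this, XH, J0_sub, J0_smul, J0_J0]
  module

lemma floer_T (h : FloerAut H v η) (s t : ℝ) :
    pT v (s, t) = J0 (pS v (s, t)) + η s • J0 (gradient H (v s t)) := by
  rw [floer_S h, J0_sub, J0_neg, J0_J0, J0_smul]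
  module

lemma quad_ineq (w G p q Jw : E n) (y : ℝ) (hJ : ‖Jw‖ = ‖w‖) :
    0 ≤ ‖w‖ ^ 2 + y * (inner ℝ w G + inner ℝ p w + inner ℝ q Jw)
      + y ^ 2 * (‖G‖ ^ 2 + ‖p‖ ^ 2 + ‖q‖ ^ 2) := by
  have e1 := norm_add_sq_real ((1/2 : ℝ) • w) (y • G)
  have e2 := norm_add_sq_real ((1/2 : ℝ) • w) (y • p)
  have e3 := norm_add_sq_real ((1/2 : ℝ) • Jw) (y • q)
  simp only [real_inner_smul_left, real_inner_smul_right, norm_smul, mul_pow, Real.norm_eq_abs,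
    sq_abs, hJ] at e1 e2 e3
  rw [real_inner_comm w p, real_inner_comm Jw q]
  nlinarith [sq_nonneg ‖(1/2 : ℝ) • w + y • G‖, sq_nonneg ‖(1/2 : ℝ) • w + y • p‖,
    sq_nonneg ‖(1/2 : ℝ) • Jw + y • q‖, sq_nonneg ‖w‖]

lemma part_a (hH : ContDiff ℝ (⊤ : ℕ∞) H) (h : FloerAut H v η) (s t : ℝ) :
    (η s) ^ 2 * f1fun H (v s t) + deriv η s * f2fun H (v s t) ≤ lapF v s t := by
  have hv := h.1
  have hS := contDiff_pS hv
  have hT := contDiff_pT hv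
  have hη : HasDerivAt η (deriv η s) s := (h.2.1.differentiable (by simp) s).hasDerivAt
  set x := v s t with hx
  set G := gradient H x with hG
  set D := fderiv ℝ (gradient H) x with hD
  set w := pS v (s, t) with hw
  set T := pT v (s, t) with hTd
  have hGd : HasFDerivAt (gradient H) D x :=
    ((contDiff_grad hH).differentiable (by simp) x).hasFDerivAt
  have hG1 : HasDerivAt (fun σ => gradient H (v σ t)) (D w) s :=
    HasFDerivAt.comp_hasDerivAt (f := fun σ => v σ t) s hGd (hasDerivAt_v1 hv s t)
  have hG2 : HasDerivAt (fun τ => gradient H (v s τ)) (D T) t :=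
    hGd.comp_hasDerivAt t (hasDerivAt_v2 hv s t)
  set m := fderiv ℝ (pS v) (s, t) (0, 1) with hm
  have hS2 : HasDerivAt (fun τ => pS v (s, τ)) m t :=
    hasDerivAt_slice2 (hS.differentiable (by simp)) s t
  have hT1 : HasDerivAt (fun σ => pT v (σ, t)) m s := by
    rw [hm, mixed hv]
    exact hasDerivAt_slice1 (hT.differentiable (by simp)) s t
  have hSS : HasDerivAt (fun σ => pS v (σ, t)) (-J0 m - (η s • D w + deriv η s • G)) s := by
    have e : (fun σ => pS v (σ, t)) = fun σ => -(JL n) (pT v (σ, t)) - η σ • gradient H (v σ t) := by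
      funext σ
      exact floer_S h σ t
    rw [e]
    exact (((JL n).hasFDerivAt.comp_hasDerivAt s hT1).neg).sub (hη.smul hG1)
  have hTT : HasDerivAt (fun τ => pT v (s, τ)) (J0 m + η s • J0 (D T)) t := by
    have e : (fun τ => pT v (s, τ))
        = fun τ => (JL n) (pS v (s, τ)) + η s • (JL n) (gradient H (v s τ)) := by
      funext τ
      exact floer_T h s τ
    rw [e]
    exact ((JL n).hasFDerivAt.comp_hasDerivAt t hS2).add
      (((JL n).hasFDerivAt.comp_hasDerivAt t hG2).const_smul (η s))
  unfold lapF
  rw [deriv2_quarter (fun σ => hasDerivAt_v1 hv σ t) hSS,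
    deriv2_quarter (fun τ => hasDerivAt_v2 hv s τ) hTT]
  have hTe : T = J0 w + η s • J0 G := floer_T h s t
  have dF := fderiv_f2 hH x w
  have dA := fderiv_a hH x T
  have dA2 : fderiv ℝ (afun H) x T
      = fderiv ℝ (afun H) x (J0 w) + η s * fderiv ℝ (afun H) x (J0 G) := by
    rw [hTe]; simp
  have nT : ‖T‖ ^ 2 = ‖w‖ ^ 2 + 2 * η s * inner ℝ w G + η s ^ 2 * ‖G‖ ^ 2 := by
    rw [hTe, norm_add_sq_real, norm_smul, norm_J0, norm_J0, real_inner_smul_right, inner_J0_J0,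
      mul_pow, Real.norm_eq_abs, sq_abs]
    ring
  have iT : (inner ℝ T (J0 G) : ℝ) = inner ℝ w G + η s * ‖G‖ ^ 2 := by
    rw [hTe, inner_add_left, real_inner_smul_left, inner_J0_J0, inner_J0_J0,
      real_inner_self_eq_norm_sq]
  have key := quad_ineq w G (gradient (f2fun H) x) (gradient (afun H) x) (J0 w) (η s) (norm_J0 w)
  rw [inner_grad, inner_grad] at key
  have f2e : f2fun H x = -(1/2) * inner ℝ x G := by
    unfold f2fun
    rw [real_inner_smul_left]; ring
  have f1e : f1fun H x = fderiv ℝ (afun H) x (J0 G)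
    - ‖G‖ ^ 2 - ‖gradient (f2fun H) x‖ ^ 2 - ‖gradient (afun H) x‖ ^ 2 := by
    unfold f1fun
    rw [inner_grad]
  simp only [← hx, ← hw, ← hTd, inner_add_right, inner_sub_right, inner_neg_right,
    real_inner_smul_right]
  rw [f1e, f2e, nT]
  rw [← hG, ← hD] at dF dA
  rw [iT, dA2] at dA
  have dF' : η s * fderiv ℝ (f2fun H) x w = η s * (-(1/2) * inner ℝ w G - (1/2) * inner ℝ x (D w)) :=
    by rw [dF]
  have dA' := congrArg (fun z => η s * z) dA
  nlinarith

/-! ### Part (b) -/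

lemma sob {φ φ' ψ : ℝ → ℝ} (hφ : ∀ τ, HasDerivAt φ (φ' τ) τ) (hφ' : Continuous φ')
    (hψ : Continuous ψ) (hle : ∀ τ, |φ' τ| ≤ ψ τ) {a x : ℝ} (hx : x ∈ Icc a (a + 1)) :
    φ x ≤ (∫ τ in a..(a + 1), φ τ) + ∫ τ in a..(a + 1), ψ τ := by
  have hφc : Continuous φ := continuous_iff_continuousAt.2 fun τ => (hφ τ).continuousAt
  have hψ0 : ∀ τ, 0 ≤ ψ τ := fun τ => (abs_nonneg _).trans (hle τ)
  have key : ∀ τ ∈ Icc a (a + 1), φ x - (∫ τ in a..(a + 1), ψ τ) ≤ φ τ := by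
    intro τ hτ
    have e1 : ∫ r in τ..x, φ' r = φ x - φ τ :=
      integral_eq_sub_of_hasDerivAt (fun r _ => hφ r) (hφ'.intervalIntegrable _ _)
    have e2 : ‖∫ r in τ..x, φ' r‖ ≤ ∫ r in uIoc τ x, ‖φ' r‖ := norm_integral_le_integral_norm_uIoc
    have hsub : uIoc τ x ⊆ Ioc a (a + 1) := by
      intro r hr
      rw [mem_uIoc] at hr
      rcases hr with hr | hr
      · exact ⟨hτ.1.trans_lt hr.1, hr.2.trans hx.2⟩
      · exact ⟨hx.1.trans_lt hr.1, hr.2.trans hτ.2⟩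
    have hψi : IntegrableOn ψ (Ioc a (a + 1)) :=
      (hψ.integrableOn_Icc).mono_set Ioc_subset_Icc_self
    have hφi : IntegrableOn (fun r => ‖φ' r‖) (uIoc τ x) :=
      ((hφ'.norm.integrableOn_Icc).mono_set Ioc_subset_Icc_self).mono_set hsub
    have e3 : ∫ r in uIoc τ x, ‖φ' r‖ ≤ ∫ r in uIoc τ x, ψ r :=
      setIntegral_mono hφi (hψi.mono_set hsub) hle
    have e4 : ∫ r in uIoc τ x, ψ r ≤ ∫ r in Ioc a (a + 1), ψ r :=
      setIntegral_mono_set hψi (Filter.Eventually.of_forall hψ0) (LE.le.eventuallyLE hsub)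
    rw [integral_of_le (by linarith : a ≤ a + 1)]
    rw [e1] at e2
    have := (le_abs_self _).trans e2
    linarith
  have h2 : ∫ τ in a..(a + 1), (φ x - (∫ τ in a..(a + 1), ψ τ)) ≤ ∫ τ in a..(a + 1), φ τ :=
    integral_mono_on (by linarith) (by simp) (hφc.intervalIntegrable _ _) key
  rw [intervalIntegral.integral_const] at h2
  simp at h2
  linarith

lemma hasDerivAt_param {f : ℝ × ℝ → ℝ} (hf : ContDiff ℝ (⊤ : ℕ∞) f) (s : ℝ) :
    HasDerivAt (fun σ => ∫ t in (0:ℝ)..1, f (σ, t))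
      (∫ t in (0:ℝ)..1, fderiv ℝ f (s, t) (1, 0)) s := by
  have hc : Continuous fun p => fderiv ℝ f p (1, 0) :=
    ((hf.fderiv_right (m := (⊤ : ℕ∞)) (by simp)).clm_apply contDiff_const).continuous
  have hK : IsCompact (Metric.closedBall s 1 ×ˢ Icc (0:ℝ) 1) :=
    (isCompact_closedBall s 1).prod isCompact_Icc
  obtain ⟨B, hB⟩ := hK.exists_bound_of_continuousOn hc.continuousOn
  have hfc := hf.continuous
  refine (intervalIntegral.hasDerivAt_integral_of_dominated_loc_of_deriv_le
    (F := fun σ t => f (σ, t)) (F' := fun σ t => fderiv ℝ f (σ, t) (1, 0))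
    (s := Metric.closedBall s 1) (bound := fun _ => B)
    (Metric.closedBall_mem_nhds s one_pos) ?_ ?_ ?_ ?_ ?_ ?_).2
  · exact Filter.Eventually.of_forall fun σ =>
      (hfc.comp (by fun_prop : Continuous fun t : ℝ => (σ, t))).aestronglyMeasurable
  · exact (hfc.comp (by fun_prop : Continuous fun t : ℝ => (s, t))).intervalIntegrable _ _
  · exact (hc.comp (by fun_prop : Continuous fun t : ℝ => (s, t))).aestronglyMeasurable
  · refine Filter.Eventually.of_forall fun t ht σ hσ => hB (σ, t) ⟨hσ, ?_⟩
    rw [uIoc_of_le zero_le_one] at ht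
    exact ⟨ht.1.le, ht.2⟩
  · simp
  · exact Filter.Eventually.of_forall fun t _ σ _ =>
      hasDerivAt_slice1 (hf.differentiable (by simp)) σ t

/-- `‖∂_s v(s)‖²_{L²}`. -/
def IS (v : ℝ → ℝ → E n) (s : ℝ) : ℝ := ∫ t in (0:ℝ)..1, ‖pS v (s, t)‖ ^ 2

lemma int01_nonneg {f : ℝ → ℝ} (h : ∀ t, 0 ≤ f t) : 0 ≤ ∫ t in (0:ℝ)..1, f t :=
  integral_nonneg zero_le_one fun t _ => h t

lemma int01_mono {f g : ℝ → ℝ} (hf : Continuous f) (hg : Continuous g)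
    (h : ∀ t ∈ Icc (0:ℝ) 1, f t ≤ g t) : ∫ t in (0:ℝ)..1, f t ≤ ∫ t in (0:ℝ)..1, g t :=
  integral_mono_on zero_le_one (hf.intervalIntegrable _ _) (hg.intervalIntegrable _ _) h

lemma int01_add {f g : ℝ → ℝ} (hf : Continuous f) (hg : Continuous g) :
    ∫ t in (0:ℝ)..1, (f t + g t) = (∫ t in (0:ℝ)..1, f t) + ∫ t in (0:ℝ)..1, g t :=
  integral_add (hf.intervalIntegrable _ _) (hg.intervalIntegrable _ _)

lemma IS_nonneg (v : ℝ → ℝ → E n) (s : ℝ) : 0 ≤ IS v s := int01_nonneg fun t => by positivity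

lemma cont_v (h : FloerAut H v η) : Continuous fun p : ℝ × ℝ => v p.1 p.2 := h.1.continuous
lemma cont_vs (h : FloerAut H v η) (s : ℝ) : Continuous (v s) := (h.2.2.1 s).1.continuous
lemma cont_pS (h : FloerAut H v η) : Continuous (pS v) := (contDiff_pS h.1).continuous
lemma cont_pT (h : FloerAut H v η) : Continuous (pT v) := (contDiff_pT h.1).continuous
lemma cont_pS1 (h : FloerAut H v η) (s : ℝ) : Continuous fun t => pS v (s, t) :=
  (cont_pS h).comp (by fun_prop)
lemma cont_pT1 (h : FloerAut H v η) (s : ℝ) : Continuous fun t => pT v (s, t) :=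
  (cont_pT h).comp (by fun_prop)

lemma cont_IS (h : FloerAut H v η) : Continuous (IS v) :=
  continuous_parametric_intervalIntegral_of_continuous'
    (f := fun s t => ‖pS v (s, t)‖ ^ 2) (by
      have := cont_pS h
      exact (by fun_prop : Continuous fun p : ℝ × ℝ => ‖pS v (p.1, p.2)‖ ^ 2)) 0 1

lemma L2_sq (f : ℝ → E n) : L2 f ^ 2 = ∫ t in (0:ℝ)..1, ‖f t‖ ^ 2 :=
  Real.sq_sqrt (int01_nonneg fun t => by positivity)

lemma L2_S (h : FloerAut H v η) (s : ℝ) :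
    L2 (fun t => deriv (fun σ => v σ t) s) ^ 2 = IS v s := by
  rw [L2_sq]
  simp only [(hasDerivAt_v1 h.1 s _).deriv]
  rfl

lemma gradNorm_eq (h : FloerAut H v η) (s : ℝ) :
    gradNorm H (v s) (η s) = Real.sqrt (IS v s) + |deriv η s| := by
  unfold gradNorm
  rw [h.2.2.2.2 s, abs_neg]
  congr 1
  unfold L2 IS
  congr 1
  congr 1
  funext t
  beta_reduce
  rw [(hasDerivAt_v2 h.1 s t).deriv, floer_T h, XH, add_sub_cancel_right, norm_J0]

lemma eps_le (h : FloerAut H v η) {ε s : ℝ} (hε : 0 < ε)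
    (hg : ε < gradNorm H (v s) (η s)) : ε ^ 2 / 2 ≤ IS v s + deriv η s ^ 2 := by
  rw [gradNorm_eq h] at hg
  have e1 := Real.sq_sqrt (IS_nonneg v s)
  have e2 := sq_abs (deriv η s)
  rw [← e1, ← e2]
  have := pow_le_pow_left₀ hε.le hg.le 2
  nlinarith [sq_nonneg (Real.sqrt (IS v s) - |deriv η s|)]

variable {M h₁ vb 𝔶 𝔢 : ℝ}

/-- The bound for `∫ (h₁ + M‖v‖)²`. -/
def k2 (M h₁ vb : ℝ) : ℝ := 2 * h₁ ^ 2 + 2 * M ^ 2 * vb ^ 2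

lemma k2_nonneg (M h₁ vb : ℝ) : 0 ≤ k2 M h₁ vb := by unfold k2; positivity

lemma int_v_sq (hvL : ∀ s, L2 (v s) ≤ vb) (s : ℝ) :
    ∫ t in (0:ℝ)..1, ‖v s t‖ ^ 2 ≤ vb ^ 2 := by
  rw [← L2_sq]
  exact pow_le_pow_left₀ (Real.sqrt_nonneg _) (hvL s) 2

lemma int_K_sq (h : FloerAut H v η) (hvL : ∀ s, L2 (v s) ≤ vb) (s : ℝ) :
    ∫ t in (0:ℝ)..1, (h₁ + M * ‖v s t‖) ^ 2 ≤ k2 M h₁ vb := by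
  have hc := cont_vs h s
  have e : ∫ t in (0:ℝ)..1, (h₁ + M * ‖v s t‖) ^ 2
      ≤ ∫ t in (0:ℝ)..1, (2 * h₁ ^ 2 + 2 * M ^ 2 * ‖v s t‖ ^ 2) := by
    refine int01_mono (by fun_prop) (by fun_prop) fun t _ => ?_
    nlinarith [sq_nonneg (h₁ - M * ‖v s t‖)]
  rw [int01_add (by fun_prop) (by fun_prop), intervalIntegral.integral_const_mul] at e
  simp at e
  have := mul_le_mul_of_nonneg_left (int_v_sq hvL s) (by positivity : 0 ≤ 2 * M ^ 2)
  unfold k2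
  linarith

lemma pT_sq_le (hM : 0 < M) (hh₁ : 0 ≤ h₁) (h : FloerAut H v η) (hG : GradBound H M h₁)
    (hη : ∀ s, |η s| ≤ 𝔶) (s t : ℝ) :
    ‖pT v (s, t)‖ ^ 2 ≤ 2 * ‖pS v (s, t)‖ ^ 2 + 2 * 𝔶 ^ 2 * (h₁ + M * ‖v s t‖) ^ 2 := by
  have e : ‖pT v (s, t)‖ ≤ ‖pS v (s, t)‖ + 𝔶 * (h₁ + M * ‖v s t‖) := by
    rw [floer_T h]
    refine (norm_add_le _ _).trans ?_
    rw [norm_J0, norm_smul, norm_J0, Real.norm_eq_abs]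
    have := mul_le_mul (hη s) (hG (v s t)) (norm_nonneg _) ((abs_nonneg _).trans (hη s))
    linarith
  have := pow_le_pow_left₀ (norm_nonneg _) e 2
  nlinarith [sq_nonneg (‖pS v (s, t)‖ - 𝔶 * (h₁ + M * ‖v s t‖))]

lemma sup_v (hM : 0 < M) (hh₁ : 0 ≤ h₁) (h : FloerAut H v η) (hG : GradBound H M h₁)
    (hvL : ∀ s, L2 (v s) ≤ vb) (hη : ∀ s, |η s| ≤ 𝔶) (s : ℝ) {t : ℝ} (ht : t ∈ Icc (0:ℝ) 1) :
    ‖v s t‖ ^ 2 ≤ 2 * vb ^ 2 + 2 * IS v s + 2 * 𝔶 ^ 2 * k2 M h₁ vb := by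
  have hc := cont_vs h s
  have hp := cont_pT1 h s
  have hs := cont_pS1 h s
  have e := sob (φ := fun τ => ‖v s τ‖ ^ 2) (φ' := fun τ => 2 * inner ℝ (v s τ) (pT v (s, τ)))
    (ψ := fun τ => ‖v s τ‖ ^ 2 + ‖pT v (s, τ)‖ ^ 2) (fun τ => (hasDerivAt_v2 h.1 s τ).norm_sq)
    (by fun_prop) (by fun_prop) (fun τ => by
      rw [abs_mul, abs_two]
      nlinarith [abs_real_inner_le_norm (v s τ) (pT v (s, τ)),
        sq_nonneg (‖v s τ‖ - ‖pT v (s, τ)‖)]) (a := 0) (x := t) (by simpa using ht)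
  rw [zero_add, int01_add (by fun_prop) (by fun_prop)] at e
  have e1 := int_v_sq hvL s
  have e2 : ∫ τ in (0:ℝ)..1, ‖pT v (s, τ)‖ ^ 2 ≤ ∫ τ in (0:ℝ)..1,
      (2 * ‖pS v (s, τ)‖ ^ 2 + 2 * 𝔶 ^ 2 * (h₁ + M * ‖v s τ‖) ^ 2) :=
    int01_mono (by fun_prop) (by fun_prop) fun τ _ => pT_sq_le hM hh₁ h hG hη s τ
  rw [int01_add (by fun_prop) (by fun_prop), intervalIntegral.integral_const_mul,
    intervalIntegral.integral_const_mul] at e2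
  have e3 := mul_le_mul_of_nonneg_left (int_K_sq (M := M) (h₁ := h₁) h hvL s)
    (by positivity : 0 ≤ 2 * 𝔶 ^ 2)
  unfold IS
  simp only at e
  linarith

lemma int_K4 (hM : 0 < M) (hh₁ : 0 ≤ h₁) (h : FloerAut H v η) (hG : GradBound H M h₁)
    (hvL : ∀ s, L2 (v s) ≤ vb) (hη : ∀ s, |η s| ≤ 𝔶) (s : ℝ) :
    ∫ t in (0:ℝ)..1, (h₁ + M * ‖v s t‖) ^ 4 ≤
      (2 * h₁ ^ 2 + 2 * M ^ 2 * (2 * vb ^ 2 + 2 * IS v s + 2 * 𝔶 ^ 2 * k2 M h₁ vb))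
        * k2 M h₁ vb := by
  have hc := cont_vs h s
  have hk := k2_nonneg M h₁ vb
  have hI := IS_nonneg v s
  set S := 2 * h₁ ^ 2 + 2 * M ^ 2 * (2 * vb ^ 2 + 2 * IS v s + 2 * 𝔶 ^ 2 * k2 M h₁ vb) with hS
  have hS0 : 0 ≤ S := by positivity
  have e : ∫ t in (0:ℝ)..1, (h₁ + M * ‖v s t‖) ^ 4
      ≤ ∫ t in (0:ℝ)..1, S * (h₁ + M * ‖v s t‖) ^ 2 := by
    refine int01_mono (by fun_prop) (by fun_prop) fun t ht => ?_
    have e1 := mul_le_mul_of_nonneg_left (sup_v hM hh₁ h hG hvL hη s ht)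
      (by positivity : 0 ≤ 2 * M ^ 2)
    have e2 : (h₁ + M * ‖v s t‖) ^ 2 ≤ S := by
      nlinarith [sq_nonneg (h₁ - M * ‖v s t‖)]
    have := mul_le_mul_of_nonneg_right e2 (sq_nonneg (h₁ + M * ‖v s t‖))
    nlinarith
  rw [intervalIntegral.integral_const_mul] at e
  exact e.trans (mul_le_mul_of_nonneg_left (int_K_sq h hvL s) hS0)

lemma energy (h : FloerAut H v η) (h𝔢 : 0 ≤ 𝔢)
    (hE : ∫⁻ s : ℝ, ENNReal.ofReal
          ((L2 (fun t => deriv (fun σ => v σ t) s)) ^ 2 + (deriv η s) ^ 2) ≤ ENNReal.ofReal 𝔢) :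
    Integrable (fun s => IS v s + deriv η s ^ 2) ∧ ∫ s, (IS v s + deriv η s ^ 2) ≤ 𝔢 := by
  have hd : Continuous (deriv η) := h.2.1.continuous_deriv (by simp)
  have hc : Continuous fun s => IS v s + deriv η s ^ 2 := by
    have := cont_IS h
    fun_prop
  have h0 : ∀ s, 0 ≤ IS v s + deriv η s ^ 2 := fun s => by
    have := IS_nonneg v s
    positivity
  simp only [L2_S h] at hE
  refine ⟨⟨hc.aestronglyMeasurable, ?_⟩, ?_⟩
  · rw [hasFiniteIntegral_iff_ofReal (Filter.Eventually.of_forall h0)]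
    exact hE.trans_lt ENNReal.ofReal_lt_top
  · rw [integral_eq_lintegral_of_nonneg_ae (Filter.Eventually.of_forall h0)
      hc.aestronglyMeasurable]
    exact ENNReal.toReal_le_of_le_ofReal h𝔢 hE

lemma eta_deriv (hH : ContDiff ℝ (⊤ : ℕ∞) H) (h : FloerAut H v η) (s : ℝ) :
    HasDerivAt (deriv η) (-∫ t in (0:ℝ)..1, inner ℝ (gradient H (v s t)) (pS v (s, t))) s := by
  have e : deriv η = fun s => -∫ t in (0:ℝ)..1, (fun p : ℝ × ℝ => H (v p.1 p.2)) (s, t) := by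
    funext s
    exact h.2.2.2.2 s
  have e2 : ∀ t, (inner ℝ (gradient H (v s t)) (pS v (s, t)) : ℝ)
      = fderiv ℝ (fun p : ℝ × ℝ => H (v p.1 p.2)) (s, t) (1, 0) := by
    intro t
    have h1 : HasFDerivAt H (fderiv ℝ H (v s t)) (v s t) :=
      (hH.differentiable (by simp) _).hasFDerivAt
    have h2 : HasFDerivAt (fun p : ℝ × ℝ => v p.1 p.2) _ (s, t) :=
      (h.1.differentiable (by simp) (s, t)).hasFDerivAt
    have h3 : HasFDerivAt (fun p : ℝ × ℝ => H (v p.1 p.2)) _ (s, t) :=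
      HasFDerivAt.comp (f := fun p : ℝ × ℝ => v p.1 p.2) (s, t) h1 h2
    rw [h3.fderiv, inner_grad]
    rfl
  simp only [e2]
  rw [e]
  exact (hasDerivAt_param (hH.comp h.1) s).neg

lemma eta_sup (hH : ContDiff ℝ (⊤ : ℕ∞) H) (hM : 0 < M) (hh₁ : 0 ≤ h₁) (h : FloerAut H v η)
    (hG : GradBound H M h₁) (hvL : ∀ s, L2 (v s) ≤ vb)
    (hi : Integrable (fun s => IS v s + deriv η s ^ 2))
    (hE : ∫ s, (IS v s + deriv η s ^ 2) ≤ 𝔢) (s : ℝ) :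
    deriv η s ^ 2 ≤ (k2 M h₁ vb + 2) * 𝔢 := by
  have hk := k2_nonneg M h₁ vb
  have hd : Continuous (deriv η) := h.2.1.continuous_deriv (by simp)
  have hIc := cont_IS h
  have hGc := (contDiff_grad hH).continuous
  have hcv := cont_v h
  have hpS := cont_pS h
  have hq : Continuous fun s =>
      -∫ t in (0:ℝ)..1, (inner ℝ (gradient H (v s t)) (pS v (s, t)) : ℝ) :=
    (continuous_parametric_intervalIntegral_of_continuous'
      (f := fun s t => (inner ℝ (gradient H (v s t)) (pS v (s, t)) : ℝ))
      ((hGc.comp hcv).inner hpS) 0 1).neg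
  have h0 : ∀ s, 0 ≤ IS v s + deriv η s ^ 2 := fun s => by
    have := IS_nonneg v s
    positivity
  have hI : ∫ τ in s..(s + 1), (IS v τ + deriv η τ ^ 2) ≤ 𝔢 := by
    rw [integral_of_le (by linarith : s ≤ s + 1)]
    exact (setIntegral_le_integral hi (Filter.Eventually.of_forall h0)).trans hE
  have e := sob (φ := fun τ => deriv η τ ^ 2)
    (φ' := fun τ => 2 * deriv η τ *
      (-∫ t in (0:ℝ)..1, (inner ℝ (gradient H (v τ t)) (pS v (τ, t)) : ℝ)))
    (ψ := fun τ => (k2 M h₁ vb + 1) * (IS v τ + deriv η τ ^ 2))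
    (fun τ => by
      have := (eta_deriv hH h τ).fun_pow 2
      refine this.congr_deriv ?_
      norm_num) (by fun_prop) (by fun_prop) (fun τ => by
      have hc1 : Continuous (v τ) := cont_vs h τ
      have hc2 := cont_pS1 h τ
      have hc3 : Continuous fun t => gradient H (v τ t) := hGc.comp hc1
      have b1 : |2 * deriv η τ * (-∫ t in (0:ℝ)..1, (inner ℝ (gradient H (v τ t)) (pS v (τ, t)) : ℝ))|
          = |∫ t in (0:ℝ)..1, 2 * deriv η τ * (inner ℝ (gradient H (v τ t)) (pS v (τ, t)) : ℝ)| := by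
        rw [intervalIntegral.integral_const_mul, mul_neg, abs_neg]
      rw [b1]
      refine (abs_integral_le_integral_abs zero_le_one).trans ?_
      have b2 : ∫ t in (0:ℝ)..1, |2 * deriv η τ * (inner ℝ (gradient H (v τ t)) (pS v (τ, t)) : ℝ)|
          ≤ ∫ t in (0:ℝ)..1, (deriv η τ ^ 2 * (h₁ + M * ‖v τ t‖) ^ 2 + ‖pS v (τ, t)‖ ^ 2) := by
        refine int01_mono (by fun_prop) (by fun_prop) fun t _ => ?_
        rw [abs_mul, abs_mul, abs_two]
        have c1 := (abs_real_inner_le_norm (gradient H (v τ t)) (pS v (τ, t))).trans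
          (mul_le_mul_of_nonneg_right (hG (v τ t)) (norm_nonneg _))
        have c2 := mul_le_mul_of_nonneg_left c1 (abs_nonneg (deriv η τ))
        have c3 := sq_abs (deriv η τ)
        nlinarith [sq_nonneg (|deriv η τ| * (h₁ + M * ‖v τ t‖) - ‖pS v (τ, t)‖)]
      rw [int01_add (by fun_prop) (by fun_prop), intervalIntegral.integral_const_mul] at b2
      have b3 := mul_le_mul_of_nonneg_left (int_K_sq (M := M) (h₁ := h₁) h hvL τ)
        (sq_nonneg (deriv η τ))
      refine b2.trans ?_
      have b4 := IS_nonneg v τ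
      have b5 := mul_nonneg hk b4
      change _ + IS v τ ≤ _
      nlinarith [sq_nonneg (deriv η τ)]) (a := s) (x := s) (by simp)
  rw [intervalIntegral.integral_const_mul] at e
  have e2 : ∫ τ in s..(s + 1), deriv η τ ^ 2 ≤ ∫ τ in s..(s + 1), (IS v τ + deriv η τ ^ 2) :=
    integral_mono_on (by linarith) ((hd.pow 2).intervalIntegrable _ _)
      ((hIc.add (hd.pow 2)).intervalIntegrable _ _) fun τ _ => by
        have := IS_nonneg v τ
        linarith
  have e3 := mul_le_mul_of_nonneg_left hI (by positivity : 0 ≤ k2 M h₁ vb + 1)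
  linarith

end

/-- **Proposition 7.2 (elliptic differential inequality and `L²`-bound for the
maximum principle).** -/
theorem elliptic_inequality_and_L2_bound (n : ℕ) (M h₁ L 𝔢 𝔶 vb ε : ℝ)
    (hM : 0 < M) (hh₁ : 0 ≤ h₁) (hL : 0 ≤ L)
    (h𝔢 : 0 ≤ 𝔢) (h𝔶 : 0 ≤ 𝔶) (hvb : 0 ≤ vb) (hε : 0 < ε) :
    -- (a) the elliptic differential inequality
    (∀ H : E n → ℝ, ContDiff ℝ (⊤ : ℕ∞) H →
      ∀ (v : ℝ → ℝ → E n) (η : ℝ → ℝ), FloerAut H v η →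
        ∀ s t : ℝ,
          (η s) ^ 2 * f1fun H (v s t) + deriv η s * f2fun H (v s t) ≤ lapF v s t) ∧
    -- (b) the L² bound, with a constant depending only on M, h₁, L, 𝔢, 𝔶, vb, ε
    ∃ C : ℝ, ∀ (H : E n → ℝ) (v : ℝ → ℝ → E n) (η : ℝ → ℝ)
        (Ω : Set (ℝ × ℝ)) (s₀ s₁ : ℝ),
      ContDiff ℝ (⊤ : ℕ∞) H → HessBound H M → GradBound H M h₁ → SatH2 H L →
      FloerAut H v η →
      (∫⁻ s : ℝ, ENNReal.ofReal
          ((L2 (fun t => deriv (fun σ => v σ t) s)) ^ 2 + (deriv η s) ^ 2)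
        ≤ ENNReal.ofReal 𝔢) →
      (∀ s, L2 (v s) ≤ vb) → (∀ s, |η s| ≤ 𝔶) →
      MeasurableSet Ω → IsConnected Ω → Ω ⊆ Set.univ ×ˢ Ico (0:ℝ) 1 →
      (∀ p ∈ Ω, s₀ ≤ p.1 ∧ p.1 ≤ s₁) →
      (∀ s ∈ Ioo s₀ s₁, ε < gradNorm H (v s) (η s)) →
      IntegrableOn
        (fun p : ℝ × ℝ =>
          ((η p.1) ^ 2 * f1fun H (v p.1 p.2) + deriv η p.1 * f2fun H (v p.1 p.2)) ^ 2)
        Ω volume ∧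
      (∫ p in Ω,
          ((η p.1) ^ 2 * f1fun H (v p.1 p.2) + deriv η p.1 * f2fun H (v p.1 p.2)) ^ 2
          ∂volume) ≤ C := by
  refine ⟨fun H hH v η h s t => part_a hH h s t, ?_⟩
  have hk := k2_nonneg M h₁ vb
  set k := k2 M h₁ vb with hkdef
  set c : ℝ := 4 * 𝔶 ^ 2 + Real.sqrt ((k + 2) * 𝔢) * (1 / M) with hc
  set α : ℝ := (2 * h₁ ^ 2 + 2 * M ^ 2 * (2 * vb ^ 2 + 2 * 𝔶 ^ 2 * k)) * k with hα
  set β : ℝ := 4 * M ^ 2 * k with hβ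
  refine ⟨c ^ 2 * (α * (2 * 𝔢 / ε ^ 2) + β * 𝔢), ?_⟩
  intro H v η Ω s₀ s₁ hH hHess hG _ h hE hvL hη hΩm _ hΩ hΩs hgrad
  have hc0 : 0 ≤ c := by positivity
  have hα0 : 0 ≤ α := by positivity
  have hβ0 : 0 ≤ β := by positivity
  clear_value c α β
  obtain ⟨hi, hE'⟩ := energy h h𝔢 hE
  have hd : Continuous (deriv η) := h.2.1.continuous_deriv (by simp)
  have hηc : Continuous η := h.2.1.continuous
  have hcv := cont_v h
  have hf1 : Continuous fun p : ℝ × ℝ => f1fun H (v p.1 p.2) := (continuous_f1 hH).comp hcv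
  have hf2 : Continuous fun p : ℝ × ℝ => f2fun H (v p.1 p.2) := (contDiff_f2 hH).continuous.comp hcv
  have hIc := cont_IS h
  have hg0 : ∀ s, 0 ≤ IS v s + deriv η s ^ 2 := fun s => by
    have := IS_nonneg v s
    positivity
  have hfc : Continuous (fun p : ℝ × ℝ =>
      ((η p.1) ^ 2 * f1fun H (v p.1 p.2) + deriv η p.1 * f2fun H (v p.1 p.2)) ^ 2) := by
    fun_prop
  have hKc : Continuous (fun p : ℝ × ℝ => c ^ 2 * (h₁ + M * ‖v p.1 p.2‖) ^ 4) := by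
    fun_prop
  have hR : IsCompact (Icc s₀ s₁ ×ˢ Icc (0:ℝ) 1) := isCompact_Icc.prod isCompact_Icc
  have hsub : Ω ⊆ Icc s₀ s₁ ×ˢ Icc (0:ℝ) 1 := fun p hp =>
    ⟨hΩs p hp, Ico_subset_Icc_self (hΩ hp).2⟩
  have hfR := hfc.continuousOn.integrableOn_compact (μ := volume) hR
  have hKR := hKc.continuousOn.integrableOn_compact (μ := volume) hR
  refine ⟨hfR.mono_set hsub, ?_⟩
  have hpt : ∀ p : ℝ × ℝ,
      ((η p.1) ^ 2 * f1fun H (v p.1 p.2) + deriv η p.1 * f2fun H (v p.1 p.2)) ^ 2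
        ≤ c ^ 2 * (h₁ + M * ‖v p.1 p.2‖) ^ 4 := by
    intro p
    have a1 := abs_f1_le hH hM hh₁ hHess hG (v p.1 p.2)
    have a2 := abs_f2_le hM hh₁ hG (v p.1 p.2)
    have a3 : |deriv η p.1| ≤ Real.sqrt ((k + 2) * 𝔢) :=
      Real.abs_le_sqrt (eta_sup hH hM hh₁ h hG hvL hi hE' p.1)
    have a4 : (η p.1) ^ 2 ≤ 𝔶 ^ 2 := by
      rw [← sq_abs]
      exact pow_le_pow_left₀ (abs_nonneg _) (hη p.1) 2
    have b1 := mul_le_mul a4 a1 (abs_nonneg _) (sq_nonneg _)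
    have b2 := mul_le_mul a3 a2 (abs_nonneg _) (Real.sqrt_nonneg _)
    have b3 : |(η p.1) ^ 2 * f1fun H (v p.1 p.2) + deriv η p.1 * f2fun H (v p.1 p.2)|
        ≤ c * (h₁ + M * ‖v p.1 p.2‖) ^ 2 := by
      refine (abs_add_le _ _).trans ?_
      rw [abs_mul, abs_mul, abs_of_nonneg (sq_nonneg (η p.1))]
      refine (add_le_add b1 b2).trans (le_of_eq ?_)
      rw [hc]; ring
    rw [← sq_abs]
    refine (pow_le_pow_left₀ (abs_nonneg _) b3 2).trans (le_of_eq ?_)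
    ring
  have s1 : (∫ p in Ω,
      ((η p.1) ^ 2 * f1fun H (v p.1 p.2) + deriv η p.1 * f2fun H (v p.1 p.2)) ^ 2)
      ≤ ∫ p in Icc s₀ s₁ ×ˢ Icc (0:ℝ) 1,
      ((η p.1) ^ 2 * f1fun H (v p.1 p.2) + deriv η p.1 * f2fun H (v p.1 p.2)) ^ 2 :=
    setIntegral_mono_set hfR (Filter.Eventually.of_forall fun p => sq_nonneg _)
      (LE.le.eventuallyLE hsub)
  have s2 : (∫ p in Icc s₀ s₁ ×ˢ Icc (0:ℝ) 1,
      ((η p.1) ^ 2 * f1fun H (v p.1 p.2) + deriv η p.1 * f2fun H (v p.1 p.2)) ^ 2)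
      ≤ ∫ p in Icc s₀ s₁ ×ˢ Icc (0:ℝ) 1, c ^ 2 * (h₁ + M * ‖v p.1 p.2‖) ^ 4 :=
    setIntegral_mono hfR hKR hpt
  have s3 : (∫ p in Icc s₀ s₁ ×ˢ Icc (0:ℝ) 1, c ^ 2 * (h₁ + M * ‖v p.1 p.2‖) ^ 4)
      = ∫ s in Icc s₀ s₁, c ^ 2 * ∫ t in (0:ℝ)..1, (h₁ + M * ‖v s t‖) ^ 4 := by
    rw [Measure.volume_eq_prod] at hKR ⊢
    rw [setIntegral_prod _ hKR]
    refine setIntegral_congr_fun measurableSet_Icc fun s _ => ?_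
    simp only
    rw [integral_Icc_eq_integral_Ioc, ← integral_of_le zero_le_one,
      intervalIntegral.integral_const_mul]
  have hc4 : Continuous fun s => c ^ 2 * ∫ t in (0:ℝ)..1, (h₁ + M * ‖v s t‖) ^ 4 :=
    continuous_const.mul (continuous_parametric_intervalIntegral_of_continuous'
      (f := fun s t => (h₁ + M * ‖v s t‖) ^ 4)
      (by exact (by fun_prop : Continuous fun p : ℝ × ℝ => (h₁ + M * ‖v p.1 p.2‖) ^ 4)) 0 1)
  have hb : Continuous fun s => c ^ 2 * (α + β * (IS v s + deriv η s ^ 2)) := by fun_prop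
  have s4 : (∫ s in Icc s₀ s₁, c ^ 2 * ∫ t in (0:ℝ)..1, (h₁ + M * ‖v s t‖) ^ 4)
      ≤ ∫ s in Icc s₀ s₁, c ^ 2 * (α + β * (IS v s + deriv η s ^ 2)) := by
    refine setIntegral_mono hc4.integrableOn_Icc hb.integrableOn_Icc fun s => ?_
    refine mul_le_mul_of_nonneg_left ?_ (sq_nonneg c)
    refine (int_K4 hM hh₁ h hG hvL hη s).trans ?_
    have := mul_nonneg hβ0 (sq_nonneg (deriv η s))
    rw [hα, ← hkdef, mul_add β]
    rw [hβ] at this ⊢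
    nlinarith
  have s5 : (∫ s in Icc s₀ s₁, c ^ 2 * (α + β * (IS v s + deriv η s ^ 2)))
      = c ^ 2 * (α * volume.real (Icc s₀ s₁)
        + β * ∫ s in Icc s₀ s₁, (IS v s + deriv η s ^ 2)) := by
    rw [MeasureTheory.integral_const_mul, MeasureTheory.integral_add (by simp)
      ((hi.integrableOn).const_mul β), MeasureTheory.integral_const_mul β, setIntegral_const,
      smul_eq_mul, mul_comm α]
  have s6 : ∫ s in Icc s₀ s₁, (IS v s + deriv η s ^ 2) ≤ 𝔢 :=
    (setIntegral_le_integral hi (Filter.Eventually.of_forall hg0)).trans hE'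
  have s7 : volume.real (Icc s₀ s₁) ≤ 2 * 𝔢 / ε ^ 2 := by
    have q1 : ∫ s in Ioo s₀ s₁, (ε ^ 2 / 2) ≤ ∫ s in Ioo s₀ s₁, (IS v s + deriv η s ^ 2) :=
      setIntegral_mono_on (by simp) hi.integrableOn measurableSet_Ioo
        fun s hs => eps_le h hε (hgrad s hs)
    have q2 : ∫ s in Ioo s₀ s₁, (IS v s + deriv η s ^ 2) ≤ 𝔢 :=
      (setIntegral_le_integral hi (Filter.Eventually.of_forall hg0)).trans hE'
    have q3 : volume.real (Icc s₀ s₁) = volume.real (Ioo s₀ s₁) := by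
      simp [Measure.real]
    rw [setIntegral_const, smul_eq_mul, ← q3] at q1
    rw [le_div_iff₀ (by positivity)]
    linarith
  rw [s3] at s2
  rw [s5] at s4
  refine s1.trans (s2.trans (s4.trans ?_))
  refine mul_le_mul_of_nonneg_left ?_ (sq_nonneg c)
  exact add_le_add (mul_le_mul_of_nonneg_left s7 hα0) (mul_le_mul_of_nonneg_left s6 hβ0)
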